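/- arXiv:2105.05142 — 6 statements merged into one kernel-verified Lean document; each statement's English description precedes it below -/
import Mathlib

section
/- There exists a liquid democracy game with no pure-strategy Nash equilibrium. Concretely, in the 3-agent game with utility vectors u_1 = (1/2, 1, 0), u_2 = (0, 1/2, 1), u_3 = (1, 0, 1/2) (where u_i = (u_{i1}, u_{i2}, u_{i3})), no pure strategy profile is a Nash equilibrium, i.e., in every pure profile some agent can strictly increase her utility by unilaterally switching to another pure strategy. -/
/-!
Doubling the utilities makes them natural numbers and preserves every strict comparison
(`pureUtil_eq_half`). The claim then concerns finitely many profiles with decidable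
comparisons, and is settled by checking all `4 ^ 3` of them (`exists_improvement`).

The reason behind it: each agent prefers her successor (cyclically) as guru to herself, and
herself to her predecessor or to having no guru. In an equilibrium everyone therefore has a
guru. With one self-voter, her successor would rather vote herself; with two
self-voters, or three, one of them is the successor of another, who would rather delegate to her.
-/

open Finset

/-- The guru of agent `i` under pure profile `s` (where `s i = some j` means `i`
delegates to `j`, with `s i = some i` meaning `i` votes herself, and `s i = none`
meaning `i` abstains): follow delegation arcs for `n` steps; the endpoint is the
guru provided it votes itself. -/
def guru {n : ℕ} (s : Fin n → Option (Fin n)) (i : Fin n) : Option (Fin n) :=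
  ((fun o => Option.bind o s)^[n] (some i)).bind
    (fun j => if s j = some j then some j else none)

/-- Utility of agent `i` in the pure profile `s`: `u i (g i)` if the guru exists, else `0`. -/
def pureUtil {n : ℕ} (u : Fin n → Fin n → ℝ) (s : Fin n → Option (Fin n)) (i : Fin n) : ℝ :=
  (guru s i).elim 0 (u i)

/-- A mixed strategy for a single agent: nonnegative, total probability at most one
(the residual probability is abstention). -/
def IsStrat {n : ℕ} (y : Fin n → ℝ) : Prop := (∀ j, 0 ≤ y j) ∧ (∑ j, y j) ≤ 1

/-- A mixed strategy profile. -/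
def IsMixed {n : ℕ} (x : Fin n → Fin n → ℝ) : Prop := ∀ i, IsStrat (x i)

/-- Probability that the independent randomization `x` produces the pure profile `s`. -/
def prob {n : ℕ} (x : Fin n → Fin n → ℝ) (s : Fin n → Option (Fin n)) : ℝ :=
  ∏ i, (s i).elim (1 - ∑ j, x i j) (x i)

/-- Expected utility of agent `i` under the mixed profile `x`. -/
def util {n : ℕ} (u x : Fin n → Fin n → ℝ) (i : Fin n) : ℝ :=
  ∑ s : Fin n → Option (Fin n), prob x s * pureUtil u s i

/-- Expected social welfare of the mixed profile `x`. -/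
def SW {n : ℕ} (u x : Fin n → Fin n → ℝ) : ℝ := ∑ i, util u x i

/-- The set of social-welfare values achievable by mixed profiles; `OPT` is its greatest element. -/
def SWvals {n : ℕ} (u : Fin n → Fin n → ℝ) : Set ℝ :=
  {w | ∃ x, IsMixed x ∧ w = SW u x}

/-- `x` is an `ε`-Nash equilibrium. -/
def EpsNash {n : ℕ} (u : Fin n → Fin n → ℝ) (ε : ℝ) (x : Fin n → Fin n → ℝ) : Prop :=
  ∀ i y, IsStrat y → util u x i ≥ (1 - ε) * util u (Function.update x i y) i

/-- `x` is an (exact, mixed) Nash equilibrium. -/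
def NashEq {n : ℕ} (u x : Fin n → Fin n → ℝ) : Prop :=
  ∀ i y, IsStrat y → util u x i ≥ util u (Function.update x i y) i

/-- Twice the utilities of the game, as natural numbers. -/
def doubledUtil : Fin 3 → Fin 3 → ℕ := ![![1, 2, 0], ![0, 1, 2], ![2, 0, 1]]

/-- Twice the utility of agent `i` in the pure profile `s`, in computable form. -/
def doubledPureUtil (s : Fin 3 → Option (Fin 3)) (i : Fin 3) : ℕ :=
  (guru s i).elim 0 (doubledUtil i)

lemma util_eq_half (i j : Fin 3) :
    (![![1/2, 1, 0], ![0, 1/2, 1], ![1, 0, 1/2]] : Fin 3 → Fin 3 → ℝ) i j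
      = (doubledUtil i j : ℝ) / 2 := by
  fin_cases i <;> fin_cases j <;> simp [doubledUtil]

lemma pureUtil_eq_half (s : Fin 3 → Option (Fin 3)) (i : Fin 3) :
    pureUtil ![![1/2, 1, 0], ![0, 1/2, 1], ![1, 0, 1/2]] s i
      = (doubledPureUtil s i : ℝ) / 2 := by
  unfold pureUtil doubledPureUtil
  cases guru s i with
  | none => simp
  | some j => exact util_eq_half i j

lemma exists_improvement_vec : ∀ a b c : Option (Fin 3), ∃ (i : Fin 3) (t : Option (Fin 3)),
    doubledPureUtil ![a, b, c] i < doubledPureUtil (Function.update ![a, b, c] i t) i := by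
  decide +kernel

lemma exists_improvement (s : Fin 3 → Option (Fin 3)) : ∃ (i : Fin 3) (t : Option (Fin 3)),
    doubledPureUtil s i < doubledPureUtil (Function.update s i t) i := by
  have hs : s = ![s 0, s 1, s 2] := by
    ext1 i
    fin_cases i <;> rfl
  rw [hs]
  exact exists_improvement_vec _ _ _

/-- There is a liquid democracy game (the concrete 3-agent game below) in which no
pure strategy profile is a Nash equilibrium: in every pure profile some agent can
strictly increase her utility by unilaterally switching her pure strategy. -/
theorem stmt0 :
    ∃ u : Fin 3 → Fin 3 → ℝ,
      (∀ i j, 0 ≤ u i j ∧ u i j ≤ 1) ∧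
      u = ![![1/2, 1, 0], ![0, 1/2, 1], ![1, 0, 1/2]] ∧
      ∀ s : Fin 3 → Option (Fin 3),
        ∃ (i : Fin 3) (t : Option (Fin 3)),
          pureUtil u (Function.update s i t) i > pureUtil u s i := by
  refine ⟨_, ?_, rfl, fun s => ?_⟩
  · intro i j
    fin_cases i <;> fin_cases j <;> norm_num
  · obtain ⟨i, t, h⟩ := exists_improvement s
    refine ⟨i, t, ?_⟩
    rw [pureUtil_eq_half, pureUtil_eq_half]
    have h' : (doubledPureUtil s i : ℝ) < doubledPureUtil (Function.update s i t) i := by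
      exact_mod_cast h
    linarith
end

section
/- In the 3-agent liquid democracy game with utility vectors u_1 = (δ, 1, 0), u_2 = (0, δ, 1), u_3 = (1, 0, δ) for δ ∈ (0,1), the mixed profile x with x_1 = (δ, 1−δ, 0), x_2 = (0, δ, 1−δ), x_3 = (1−δ, 0, δ) is a mixed-strategy Nash equilibrium in which every agent has expected utility exactly δ, so SW(x) = 3δ; moreover the optimal social welfare of this game is OPT = 1 + 2δ. -/
/-!
With three agents the guru of agent `i` is found after at most two delegation arcs, so averaging over
the 64 pure profiles gives a closed form for the expected utility (`util_three`): agent `i` has guru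
`i` with probability `x i i`, and guru `j ≠ i` when `j` votes and `i` reaches `j`, either directly or
through the third agent.

In the given profile an agent who votes gets `δ`, one who delegates to her favourite gets `1` with
the probability `δ` that the favourite votes and `0` otherwise, and one who delegates to the third
agent gets `0`: if that agent does not vote, she delegates back and closes a cycle. So every strategy
yields at most `δ`, and the equilibrium strategies yield exactly `δ`.

For the optimum, welfare is an average of pure-profile welfares (`SW_le_of_pure`), and no pure profile
exceeds `1 + 2δ`: each of the 64 cases is linear arithmetic from `0 < δ < 1`. Agents 1 and 2 voting
while agent 3 delegates to agent 1 attains it.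
-/

open Finset

/-- Sums over pure profiles of three agents, as iterated sums over the three choices. -/
lemma sum_profiles_three (f : (Fin 3 → Option (Fin 3)) → ℝ) :
    ∑ s, f s = ∑ a, ∑ b, ∑ c, f ![a, b, c] := by
  rw [← (Fin.consEquiv (fun _ : Fin 3 => Option (Fin 3))).sum_comp, Fintype.sum_prod_type]
  refine Finset.sum_congr rfl fun a _ => ?_
  rw [← (Fin.consEquiv (fun _ : Fin 2 => Option (Fin 3))).sum_comp, Fintype.sum_prod_type]
  refine Finset.sum_congr rfl fun b _ => ?_
  rw [← (Fin.consEquiv (fun _ : Fin 1 => Option (Fin 3))).sum_comp, Fintype.sum_prod_type]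
  refine Finset.sum_congr rfl fun c _ => ?_
  rw [Fintype.sum_unique]
  congr 1

/-- Expected utility in a three-agent game: the guru is `j ≠ i` when `j` votes and `i` reaches `j`
directly or through the third agent. Addition of agents is modulo `3`. -/
lemma util_three (u x : Fin 3 → Fin 3 → ℝ) (i : Fin 3) :
    util u x i = u i i * x i i
      + u i (i + 1) * (x (i + 1) (i + 1) * (x i (i + 1) + x i (i + 2) * x (i + 2) (i + 1)))
      + u i (i + 2) * (x (i + 2) (i + 2) * (x i (i + 2) + x i (i + 1) * x (i + 1) (i + 2))) := by
  unfold util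
  rw [sum_profiles_three]
  fin_cases i <;>
  · simp [Fintype.sum_option, Fin.sum_univ_three, prob, Fin.prod_univ_three, pureUtil, guru]
    ring

lemma sum_prob {n : ℕ} (x : Fin n → Fin n → ℝ) : ∑ s, prob x s = 1 := by
  unfold prob
  rw [← Fintype.prod_sum (fun i (o : Option (Fin n)) => o.elim (1 - ∑ j, x i j) (x i))]
  simp [Fintype.sum_option]

lemma prob_nonneg {n : ℕ} {x : Fin n → Fin n → ℝ} (hx : IsMixed x)
    (s : Fin n → Option (Fin n)) : 0 ≤ prob x s := by
  refine Finset.prod_nonneg fun i _ => ?_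
  cases s i with
  | none => simpa using (hx i).2
  | some j => exact (hx i).1 j

/-- A bound on the welfare of all pure profiles bounds that of all mixed profiles. -/
lemma SW_le_of_pure {n : ℕ} {u x : Fin n → Fin n → ℝ} (hx : IsMixed x) {B : ℝ}
    (hB : ∀ s, ∑ i, pureUtil u s i ≤ B) : SW u x ≤ B := by
  calc SW u x = ∑ s, prob x s * ∑ i, pureUtil u s i := by
        unfold SW util
        rw [Finset.sum_comm]
        simp_rw [Finset.mul_sum]
    _ ≤ ∑ s, prob x s * B :=
        Finset.sum_le_sum fun s _ => mul_le_mul_of_nonneg_left (hB s) (prob_nonneg hx s)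
    _ = B := by rw [← Finset.sum_mul, sum_prob, one_mul]

lemma pure_welfare_le {δ : ℝ} (hδ0 : 0 < δ) (hδ1 : δ < 1) (s : Fin 3 → Option (Fin 3)) :
    ∑ i, pureUtil ![![δ, 1, 0], ![0, δ, 1], ![1, 0, δ]] s i ≤ 1 + 2 * δ := by
  have hs : s = ![s 0, s 1, s 2] := by
    funext i; fin_cases i <;> rfl
  rw [hs]
  generalize s 0 = a
  generalize s 1 = b
  generalize s 2 = c
  rcases a with _ | a <;> rcases b with _ | b <;> rcases c with _ | c <;>
    (try fin_cases a) <;> (try fin_cases b) <;> (try fin_cases c) <;>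
    simp [Fin.sum_univ_three, pureUtil, guru] <;> linarith

/-- In the 3-agent game with utilities u₁ = (δ,1,0), u₂ = (0,δ,1), u₃ = (1,0,δ),
the profile x₁ = (δ,1-δ,0), x₂ = (0,δ,1-δ), x₃ = (1-δ,0,δ) is a mixed Nash
equilibrium in which every agent has expected utility δ, so SW(x) = 3δ;
moreover OPT = 1 + 2δ. -/
theorem stmt1 (δ : ℝ) (hδ0 : 0 < δ) (hδ1 : δ < 1)
    (u : Fin 3 → Fin 3 → ℝ) (hu : u = ![![δ, 1, 0], ![0, δ, 1], ![1, 0, δ]])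
    (x : Fin 3 → Fin 3 → ℝ)
    (hx : x = ![![δ, 1-δ, 0], ![0, δ, 1-δ], ![1-δ, 0, δ]]) :
    IsMixed x ∧ NashEq u x ∧ (∀ i, util u x i = δ) ∧ SW u x = 3 * δ ∧
      IsGreatest (SWvals u) (1 + 2 * δ) := by
  have hutil : ∀ i, util u x i = δ := by
    intro i
    rw [util_three, hu, hx]
    fin_cases i <;> simp <;> ring
  refine ⟨?_, ?_, hutil, ?_, ?_, ?_⟩
  · intro i
    refine ⟨fun j => ?_, ?_⟩
    · rw [hx]
      fin_cases i <;> fin_cases j <;> simp <;> linarith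
    · rw [hx]
      fin_cases i <;> simp [Fin.sum_univ_three]
  · rintro i y ⟨hy0, hy1⟩
    rw [hutil, util_three, hu, hx]
    rw [Fin.sum_univ_three] at hy1
    have h0 := hy0 0
    have h1 := hy0 1
    have h2 := hy0 2
    -- The deviation `y` yields `δ` times the probability of voting or delegating to the favourite.
    fin_cases i <;> simp [Function.update] <;> nlinarith
  · simp [SW, hutil]
  · refine ⟨![![1, 0, 0], ![0, 1, 0], ![1, 0, 0]], ?_, ?_⟩
    · intro i
      refine ⟨fun j => ?_, ?_⟩
      · fin_cases i <;> fin_cases j <;> simp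
      · fin_cases i <;> simp [Fin.sum_univ_three]
    · simp only [SW, Fin.sum_univ_three, util_three, hu]
      simp
      ring
  · rintro w ⟨z, hz, rfl⟩
    exact SW_le_of_pure hz fun s => hu ▸ pure_welfare_le hδ0 hδ1 s
end

section
/- In any liquid democracy game, abstaining is weakly dominated: for every mixed profile x and every agent i there exists a mixed strategy x̂_i with Σ_j x̂_{ij} = 1 (i abstains with probability 0) such that u_i(x̂_i, x_{−i}) ≥ u_i(x_i, x_{−i}). -/
/-!
The strategy `y` moves all of agent `i`'s abstention probability onto voting herself. In every
pure profile where `i` abstains she has no guru, hence utility `0` (`pureUtil_of_abstain`). In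
every other pure profile her utility is nonnegative, and the profile is at least as probable
under `y` as under `x i`, since no entry of `x i` was decreased. So the expected utilities, as
sums over pure profiles, compare term by term.
-/

open Finset

lemma pureUtil_nonneg {n : ℕ} (u : Fin n → Fin n → ℝ) (hu : ∀ i j, 0 ≤ u i j)
    (s : Fin n → Option (Fin n)) (i : Fin n) : 0 ≤ pureUtil u s i := by
  unfold pureUtil
  cases guru s i with
  | none => exact le_rfl
  | some j => exact hu i j

lemma pureUtil_of_abstain {n : ℕ} (u : Fin n → Fin n → ℝ)
    (s : Fin n → Option (Fin n)) (i : Fin n) (h : s i = none) : pureUtil u s i = 0 := by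
  have hg : guru s i = none := by
    unfold guru
    -- At least one step is taken because `Fin n` is inhabited by `i`; that step already fails.
    obtain ⟨m, rfl⟩ : ∃ m, n = m + 1 := ⟨n - 1, by have := i.isLt; omega⟩
    rw [Function.iterate_succ_apply]
    have hfix : (fun o : Option (Fin (m + 1)) => Option.bind o s)^[m] none = none :=
      Function.iterate_fixed rfl m
    simp only [Option.bind_some, h, hfix, Option.bind_none]
  simp [pureUtil, hg]

/-- Abstaining is weakly dominated: for every mixed profile x and agent i there is
a mixed strategy x̂ᵢ with total probability 1 (no abstention) that does at least
as well against x₋ᵢ. -/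
theorem stmt3 {n : ℕ} (u : Fin n → Fin n → ℝ) (hu : ∀ i j, 0 ≤ u i j ∧ u i j ≤ 1)
    (x : Fin n → Fin n → ℝ) (hx : IsMixed x) (i : Fin n) :
    ∃ y : Fin n → ℝ, (∀ j, 0 ≤ y j) ∧ (∑ j, y j) = 1 ∧
      util u (Function.update x i y) i ≥ util u x i := by
  have ha : 0 ≤ 1 - ∑ j, x i j := sub_nonneg.2 (hx i).2
  have hle : ∀ j, x i j ≤ x i j + (if j = i then 1 - ∑ k, x i k else 0) := by
    intro j
    split_ifs <;> linarith
  refine ⟨fun j => x i j + (if j = i then 1 - ∑ k, x i k else 0),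
    fun j => ((hx i).1 j).trans (hle j), by simp [Finset.sum_add_distrib], ?_⟩
  refine Finset.sum_le_sum fun s _ => ?_
  by_cases h : s i = none
  · simp [pureUtil_of_abstain u s i h]
  refine mul_le_mul_of_nonneg_right ?_ (pureUtil_nonneg u (fun i j => (hu i j).1) s i)
  refine Finset.prod_le_prod (fun k _ => ?_) fun k _ => ?_
  · cases s k with
    | none => exact sub_nonneg.2 (hx k).2
    | some j => exact (hx k).1 j
  · by_cases hk : k = i
    · subst hk
      obtain ⟨j, hj⟩ := Option.ne_none_iff_exists'.1 h
      simpa only [hj, Option.elim_some, Function.update_self] using hle j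
    · simp [Function.update_of_ne hk]
end

section
/- In any liquid democracy game there is an optimal pure delegation graph that is a disjoint union of jolly stars: there exists a pure profile x* achieving social welfare OPT such that every agent either votes herself, or delegates directly to an agent j who votes herself with u_{ij} > 0 (in particular, no agent abstains and every delegation chain has length at most one). -/
/-!
The welfare of a mixed profile is the average of the welfares of pure profiles, weighted by `prob`
(`SW_eq_sum`), and these weights are nonnegative and sum to one. Hence a pure profile of maximal
welfare attains `OPT`; conversely every pure profile is a degenerate mixed one (`SW_pureMixed`), so
no pure profile exceeds `OPT`.

An optimal pure profile is then flattened (`starify`): each agent delegates directly to her guru if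
that gives her positive utility, and votes herself otherwise. A guru of anybody is her own guru, so
she still votes herself after flattening. Agents with positive utility keep their guru, and the
others had utility zero and cannot lose, so the welfare does not decrease and stays equal to `OPT`.
-/

open Finset

/-- The mixed profile that plays the pure profile `s` with probability one. -/
def pureMixed {n : ℕ} (s : Fin n → Option (Fin n)) : Fin n → Fin n → ℝ :=
  fun i j => if s i = some j then 1 else 0

/-- The residual mass of `pureMixed s i` is one exactly when `i` abstains. -/
lemma pureMixed_sum {n : ℕ} (s : Fin n → Option (Fin n)) (i : Fin n) :
    ∑ j, pureMixed s i j = if s i = none then 0 else 1 := by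
  unfold pureMixed
  cases s i <;> simp

lemma isMixed_pureMixed {n : ℕ} (s : Fin n → Option (Fin n)) : IsMixed (pureMixed s) := by
  intro i
  constructor
  · intro j
    unfold pureMixed
    split_ifs <;> norm_num
  · rw [pureMixed_sum]
    split_ifs <;> norm_num

lemma prob_pureMixed {n : ℕ} (s t : Fin n → Option (Fin n)) :
    prob (pureMixed s) t = if t = s then 1 else 0 := by
  have factor : ∀ i, (t i).elim (1 - ∑ j, pureMixed s i j) (pureMixed s i) =
      if t i = s i then 1 else 0 := by
    intro i
    rw [pureMixed_sum]
    unfold pureMixed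
    cases t i <;> cases s i <;> simp [eq_comm]
  unfold prob
  simp only [factor]
  split_ifs with h
  · simp [h]
  · obtain ⟨i, hi⟩ := Function.ne_iff.mp h
    exact Finset.prod_eq_zero (Finset.mem_univ i) (by simp [hi])

lemma SW_eq_sum {n : ℕ} (u x : Fin n → Fin n → ℝ) :
    SW u x = ∑ s, prob x s * ∑ i, pureUtil u s i := by
  unfold SW util
  rw [Finset.sum_comm]
  simp only [Finset.mul_sum]

lemma SW_pureMixed {n : ℕ} (u : Fin n → Fin n → ℝ) (s : Fin n → Option (Fin n)) :
    SW u (pureMixed s) = ∑ i, pureUtil u s i := by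
  simp [SW_eq_sum, prob_pureMixed]

lemma iterate_bind_self {n : ℕ} {s : Fin n → Option (Fin n)} {g : Fin n} (h : s g = some g)
    (k : ℕ) : (fun o => Option.bind o s)^[k] (some g) = some g :=
  Function.iterate_fixed (by simpa using h) k

lemma guru_self {n : ℕ} {s : Fin n → Option (Fin n)} {g : Fin n} (h : s g = some g) :
    guru s g = some g := by
  unfold guru
  simp [iterate_bind_self h, h]

/-- One delegation step already reaches the guru when the delegate votes herself. The `n` steps in
the definition of `guru` are enough because `Fin n` is inhabited, so `n` is positive. -/
lemma guru_of_direct {n : ℕ} {s : Fin n → Option (Fin n)} {i g : Fin n} (hi : s i = some g)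
    (hg : s g = some g) : guru s i = some g := by
  unfold guru
  obtain ⟨m, rfl⟩ : ∃ m, n = m + 1 := ⟨n - 1, by have := i.pos; omega⟩
  simp [Function.iterate_succ_apply, hi, iterate_bind_self hg, hg]

lemma votes_of_guru {n : ℕ} {s : Fin n → Option (Fin n)} {i g : Fin n}
    (h : guru s i = some g) : s g = some g := by
  unfold guru at h
  obtain ⟨j, -, hj⟩ := Option.bind_eq_some_iff.mp h
  split_ifs at hj with hs
  cases hj
  exact hs

open Classical in
/-- The flattening of `s`: an agent delegates directly to her guru under `s` if the guru exists
and gives her positive utility, and votes herself otherwise. -/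
noncomputable def starify {n : ℕ} (u : Fin n → Fin n → ℝ) (s : Fin n → Option (Fin n)) :
    Fin n → Option (Fin n) :=
  fun i => if 0 < pureUtil u s i then guru s i else some i

lemma starify_guru {n : ℕ} (u : Fin n → Fin n → ℝ) {s : Fin n → Option (Fin n)} {i g : Fin n}
    (h : guru s i = some g) : starify u s g = some g := by
  unfold starify
  rw [guru_self (votes_of_guru h), ite_self]

/-- An agent with positive utility has a guru, and flattening makes her delegate to that guru. -/
lemma starify_of_pos {n : ℕ} {u : Fin n → Fin n → ℝ} {s : Fin n → Option (Fin n)} {i : Fin n}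
    (h : 0 < pureUtil u s i) :
    ∃ g, guru s i = some g ∧ starify u s i = some g ∧ 0 < u i g := by
  cases hg : guru s i with
  | none => simp [pureUtil, hg] at h
  | some g => exact ⟨g, rfl, by simp [starify, h, hg], by simpa [pureUtil, hg] using h⟩

lemma pureUtil_le_starify {n : ℕ} {u : Fin n → Fin n → ℝ} (hu : ∀ i j, 0 ≤ u i j)
    (s : Fin n → Option (Fin n)) (i : Fin n) :
    pureUtil u s i ≤ pureUtil u (starify u s) i := by
  by_cases h : 0 < pureUtil u s i
  · obtain ⟨g, hg, hi, -⟩ := starify_of_pos h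
    simp [pureUtil, hg, guru_of_direct hi (starify_guru u hg)]
  · refine (not_lt.mp h).trans ?_
    unfold pureUtil
    cases guru (starify u s) i with
    | none => exact le_rfl
    | some g => exact hu i g

/-- There is an optimal pure delegation graph that is a disjoint union of jolly
stars: every agent either votes herself, or delegates directly to a self-voting
agent j with u i j > 0. -/
theorem stmt5 {n : ℕ} (u : Fin n → Fin n → ℝ) (hu : ∀ i j, 0 ≤ u i j ∧ u i j ≤ 1)
    (OPT : ℝ) (hOPT : IsGreatest (SWvals u) OPT) :
    ∃ s : Fin n → Option (Fin n),
      (∑ i, pureUtil u s i) = OPT ∧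
      ∀ i, s i = some i ∨ ∃ j, j ≠ i ∧ s i = some j ∧ s j = some j ∧ 0 < u i j := by
  have pure_le : ∀ s, ∑ i, pureUtil u s i ≤ OPT := fun s =>
    hOPT.2 ⟨pureMixed s, isMixed_pureMixed s, (SW_pureMixed u s).symm⟩
  obtain ⟨x, hx, hxOPT⟩ := hOPT.1
  obtain ⟨s, hs⟩ := Finite.exists_max fun s : Fin n → Option (Fin n) => ∑ i, pureUtil u s i
  have opt_le : OPT ≤ ∑ i, pureUtil u s i := by
    calc OPT = ∑ t, prob x t * ∑ i, pureUtil u t i := by rw [hxOPT, SW_eq_sum]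
      _ ≤ ∑ t, prob x t * ∑ i, pureUtil u s i :=
        Finset.sum_le_sum fun t _ => mul_le_mul_of_nonneg_left (hs t) (prob_nonneg hx t)
      _ = ∑ i, pureUtil u s i := by rw [← Finset.sum_mul, sum_prob, one_mul]
  refine ⟨starify u s, le_antisymm (pure_le _) (opt_le.trans ?_), fun i => ?_⟩
  · exact Finset.sum_le_sum fun i _ => pureUtil_le_starify (fun i j => (hu i j).1) s i
  · by_cases h : 0 < pureUtil u s i
    · obtain ⟨g, hg, hi, hpos⟩ := starify_of_pos h
      by_cases hgi : g = i
      · exact Or.inl (hgi ▸ starify_guru u hg)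
      · exact Or.inr ⟨g, hgi, hi, starify_guru u hg, hpos⟩
    · exact Or.inl (by simp [starify, h])
end

section
/- Fixed point existence (Theorem 4): For every ε ∈ [0,1], every liquid democracy game, and every subset D* ⊆ V of agents, there exists a mixed strategy profile x such that (a) for every i ∈ D*, x_i is a best response to x_{−i} among the restricted strategies S^R_i = { x_i ∈ R_+^n : Σ_j x_{ij} = 1 and x_{ii} ≥ ε }, i.e., u_i(x_i, x_{−i}) ≥ u_i(x̂_i, x_{−i}) for all x̂_i ∈ S^R_i, and (b) for every j ∉ D*, x_j is a best response to x_{−j} among all non-abstaining mixed strategies S_j = { x_j ∈ R_+^n : Σ_k x_{jk} = 1 }. -/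
/-!
The statement is a Nash-type existence theorem, so some fixed point theorem is unavoidable; Brouwer's
theorem for the standard simplex is proved here from a parity lemma of Scarf about finitely many
linear orders.

*Parity lemma.* Let `X` be finite with one linear order for each index `i : ι`, and call a set
`Dominant` if no element of `X` lies strictly above, in every order, the minimum of the set in that
order. Dominant sets with `card ι` elements ("rooms") behave like the maximal simplices of a
triangulation, and their subsets with one element less ("doors") like its facets: a door lies in
exactly zero or two rooms (`card_rooms_even`), except for boundary doors, which consist of "slack"
elements only. Here `X` contains one slack element for each index, the bottom of its own order and
near the top of all others. Double counting the incidences between rooms and doors that carry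
all colours but one gives a room carrying all colours (`exists_colorful`).

*Brouwer.* Take for `X` the points of mesh `1 / k` of the simplex, ordered by each coordinate
(with ties broken), together with the slack elements, and colour a point `x` by some `i` with
`x i ≤ h x i`. Dominance forces all points of a room to be within `card ι / k` of each other, and a
coordinate whose slack element belongs to the room to be at most `card ι / k`. Hence a room with all
colours yields a point with `x ≤ h x` up to a small error; compactness removes the error, and
`x ≤ h x` in the simplex means `h x = x` (`brouwer_stdSimplex`).

*Equilibrium.* Requiring agent `i` to vote with probability at least `e i` means that she plays
`e i • δ_i + (1 - e i) • z_i` with `z_i` an arbitrary mixed strategy (`mix`). Expected utility is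
affine in the agent's own strategy (`util_update`), so Nash's map applies to the `z_i`; it is
transported to a simplex on `Fin n × Fin n` by normalising each row (`toProfile`). At a fixed point
no pure choice beats `z_i`, and this is inherited by the mixed strategies with the constraint
(`best_response_mix`). The agents in `D` have `e i = ε`, the others `e i = 0`.
-/

open Finset

/-! ### Dominant sets and Scarf's parity lemma -/

/-- A set `S` is dominant for the linear orders given by the injections `F i : X → ℕ` if every `y`
is, for some `i`, a lower bound of `S` in the `i`-th order. -/
def Dominant {ι X : Type*} (F : ι → X → ℕ) (S : Finset X) : Prop :=
  ∀ y, ∃ i, ∀ x ∈ S, F i y ≤ F i x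

section Scarf
variable {ι X : Type*}

/-- Each element of a dominant set is its minimum in one of the orders. -/
theorem Dominant.argmin_surj {F : ι → X → ℕ} (hF : ∀ i, Function.Injective (F i))
    {S : Finset X} (hS : Dominant F S) {a : ι → X} (haS : ∀ i, a i ∈ S)
    (ha : ∀ i, ∀ x ∈ S, F i (a i) ≤ F i x) : ∀ x ∈ S, ∃ i, a i = x := by
  intro x hx
  obtain ⟨i, hi⟩ := hS x
  exact ⟨i, hF i (le_antisymm (ha i x hx) (hi _ (haS i)))⟩

variable [Fintype ι] [DecidableEq X]

theorem Dominant.argmin_inj {F : ι → X → ℕ} (hF : ∀ i, Function.Injective (F i))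
    {S : Finset X} (hS : Dominant F S) (hcard : S.card = Fintype.card ι) {a : ι → X}
    (haS : ∀ i, a i ∈ S) (ha : ∀ i, ∀ x ∈ S, F i (a i) ≤ F i x) : Function.Injective a := by
  have h := hS.argmin_surj hF haS ha
  have him : univ.image a = S := by
    ext x; simp only [mem_image, mem_univ, true_and]
    exact ⟨by rintro ⟨i, rfl⟩; exact haS i, h x⟩
  have : (univ.image a).card = (univ : Finset ι).card := by rw [him, hcard, card_univ]
  have := card_image_iff.1 this
  intro i j hij
  exact this (by simp) (by simp) hij

/-- If adding `x` to the door `τ` gives a room, then `x` is the new minimum for exactly one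
index `k`, which must be one of the two indices `i`, `j` at which the minima `a` of `τ` coincide,
and `x` is the `F k`-largest element above all the other minima. So each of `i`, `j` accounts for
at most one room. -/
theorem room_candidates {F : ι → X → ℕ} (hF : ∀ i, Function.Injective (F i))
    {τ : Finset X} {a : ι → X} (haτ : ∀ i, a i ∈ τ)
    (ha : ∀ i, ∀ x ∈ τ, F i (a i) ≤ F i x) {i j : ι} (hij : i ≠ j) (haij : a i = a j)
    (hcard : τ.card + 1 = Fintype.card ι) {x : X} (hx : x ∉ τ)
    (hdom : Dominant F (insert x τ)) :
    ∃ k, (k = i ∨ k = j) ∧ (∀ l, l ≠ k → F l (a l) < F l x) ∧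
      ∀ y, (∀ l, l ≠ k → F l (a l) < F l y) → F k y ≤ F k x := by
  classical
  let b : ι → X := fun l => if F l x < F l (a l) then x else a l
  have hbS : ∀ l, b l ∈ insert x τ := by
    intro l; simp only [b]; split_ifs <;> simp [haτ]
  have hb : ∀ l, ∀ y ∈ insert x τ, F l (b l) ≤ F l y := by
    intro l y hy
    have := ha l y
    simp only [b]; split_ifs <;> grind
  have hc : (insert x τ).card = Fintype.card ι := by rw [card_insert_of_notMem hx, hcard]
  have hinj := hdom.argmin_inj hF hc hbS hb
  obtain ⟨k, hk⟩ := hdom.argmin_surj hF hbS hb x (mem_insert_self _ _)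
  have hlt : ∀ l, l ≠ k → F l (a l) < F l x := by
    intro l hl
    by_contra h
    have hne : F l x ≠ F l (a l) := fun h' => hx (hF l h' ▸ haτ l)
    have : b l = x := by simp only [b]; rw [if_pos (by omega)]
    exact hl (hinj (this.trans hk.symm))
  refine ⟨k, ?_, hlt, ?_⟩
  · by_contra hne
    push Not at hne
    have h1 : b i = a i := if_neg (by have := hlt i hne.1.symm; omega)
    have h2 : b j = a j := if_neg (by have := hlt j hne.2.symm; omega)
    exact hij (hinj (by rw [h1, h2, haij]))
  · intro y hy
    obtain ⟨l, hl⟩ := hdom y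
    by_cases hlk : l = k
    · subst hlk; exact hl x (mem_insert_self _ _)
    · have := hy l hlk
      have := hl (a l) (mem_insert_of_mem (haτ l))
      omega

/-- Converse of `room_candidates`: for an index `i` at which the minima of `τ` coincide with
those at another index, the `F i`-largest element above all the other minima completes `τ` to a
room. -/
theorem exists_room [Fintype X] {F : ι → X → ℕ}
    {τ : Finset X} (hdom : Dominant F τ) {a : ι → X} (haτ : ∀ i, a i ∈ τ)
    (ha : ∀ i, ∀ x ∈ τ, F i (a i) ≤ F i x) {i j : ι} (hij : i ≠ j) (haij : a i = a j)
    (hsurj : ∀ x ∈ τ, ∃ i, a i = x) (hM : ∃ y, ∀ l, l ≠ i → F l (a l) < F l y) :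
    ∃ x, x ∉ τ ∧ Dominant F (insert x τ) ∧ (∀ l, l ≠ i → F l (a l) < F l x) ∧
      ∀ y, (∀ l, l ≠ i → F l (a l) < F l y) → F i y ≤ F i x := by
  classical
  obtain ⟨y, hy⟩ := hM
  obtain ⟨x, hx, hmax⟩ := (univ.filter fun y => ∀ l, l ≠ i → F l (a l) < F l y).exists_max_image
    (F i) ⟨y, by simpa using hy⟩
  simp only [mem_filter, mem_univ, true_and] at hx hmax
  refine ⟨x, ?_, ?_, hx, hmax⟩
  · intro hxτ
    obtain ⟨l, rfl⟩ := hsurj x hxτ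
    by_cases hl : l = i
    · subst hl
      have := hx j hij.symm
      rw [haij] at this
      omega
    · have := hx l hl; omega
  · have hxi : F i x ≤ F i (a i) := by
      obtain ⟨l, hl⟩ := hdom x
      have h1 := hl _ (haτ l)
      by_cases hli : l = i
      · subst hli; exact h1
      · have := hx l hli; omega
    intro y
    by_cases hy : ∀ l, l ≠ i → F l (a l) < F l y
    · refine ⟨i, fun z hz => ?_⟩
      have := hmax y hy
      rcases mem_insert.1 hz with rfl | hz
      · exact this
      · have := ha i z hz; omega
    · push Not at hy
      obtain ⟨l, hl, hle⟩ := hy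
      refine ⟨l, fun z hz => ?_⟩
      rcases mem_insert.1 hz with rfl | hz
      · have := hx l hl; omega
      · have := ha l z hz; omega

variable [DecidableEq ι] [Fintype X]

open Classical in
/-- A door containing an element `t` that is not slack lies in an even number of rooms. If it lies
in one at all, it lies in exactly two, one for each index of the coinciding pair of minima; the
slack elements `s k` ensure that both candidate sets are nonempty. -/
theorem card_rooms_even {F : ι → X → ℕ} (hF : ∀ i, Function.Injective (F i))
    {s : ι → X} (hs : Function.Injective s) (hbot : ∀ i x, F i (s i) ≤ F i x)
    (htop : ∀ i j x, j ≠ i → x ∉ Set.range s → F i x < F i (s j))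
    {τ : Finset X} (hcard : τ.card + 1 = Fintype.card ι) {t : X} (ht : t ∈ τ)
    (hts : t ∉ Set.range s) :
    Even #{S : Finset X | (Dominant F S ∧ S.card = Fintype.card ι) ∧ τ ⊆ S} := by
  classical
  rcases Finset.eq_empty_or_nonempty
    ({S : Finset X | (Dominant F S ∧ S.card = Fintype.card ι) ∧ τ ⊆ S} : Finset (Finset X))
    with h0 | ⟨S₀, hS₀⟩
  · rw [h0]; simp
  simp only [mem_filter, mem_univ, true_and] at hS₀
  obtain ⟨⟨hS₀d, hS₀c⟩, hτS₀⟩ := hS₀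
  have hτd : Dominant F τ := fun y => (hS₀d y).imp fun i hi x hx => hi x (hτS₀ hx)
  have hmin : ∀ i, ∃ x ∈ τ, ∀ y ∈ τ, F i x ≤ F i y := fun i =>
    τ.exists_min_image (F i) ⟨t, ht⟩
  choose a haτ ha using hmin
  have hsurj := hτd.argmin_surj hF haτ ha
  obtain ⟨i, -, j, -, hij, haij⟩ := Finset.exists_ne_map_eq_of_card_lt_of_maps_to
    (s := univ) (t := τ) (f := a) (by rw [card_univ]; omega) (fun i _ => haτ i)
  have hM : ∀ k, ∃ y, ∀ l, l ≠ k → F l (a l) < F l y := by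
    intro k
    refine ⟨s k, fun l hl => ?_⟩
    by_cases hal : a l ∈ Set.range s
    · obtain ⟨m, hm⟩ := hal
      by_cases hml : m = l
      · subst hml
        rw [← hm]
        refine lt_of_le_of_ne (hbot _ _) fun h => hl (hs (hF _ h))
      · have h1 := htop l m t hml hts
        have h2 := ha l t ht
        rw [← hm] at h2
        omega
    · exact htop l k _ hl.symm hal
  obtain ⟨x, hxτ, hxd, hx, hxm⟩ := exists_room hτd haτ ha hij haij hsurj (hM i)
  obtain ⟨y, hyτ, hyd, hy, hym⟩ := exists_room hτd haτ ha hij.symm haij.symm hsurj (hM j)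
  have hxy : x ≠ y := by
    rintro rfl
    obtain ⟨l, hl⟩ := hτd x
    have h1 := hl _ (haτ l)
    by_cases hli : l = i
    · subst hli; have := hy l hij; omega
    · have := hx l hli; omega
  have : ({S : Finset X | (Dominant F S ∧ S.card = Fintype.card ι) ∧ τ ⊆ S} : Finset (Finset X))
      = {insert x τ, insert y τ} := by
    ext S
    simp only [mem_filter, mem_univ, true_and, mem_insert, mem_singleton]
    constructor
    · rintro ⟨⟨hSd, hSc⟩, hτS⟩
      obtain ⟨z, hz, rfl⟩ := Finset.exists_eq_insert_iff.2 ⟨hτS, by rw [hSc, hcard]⟩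
      obtain ⟨k, hk, hzk, hzm⟩ := room_candidates hF haτ ha hij haij hcard hz hSd
      rcases hk with rfl | rfl
      · left; rw [hF k (le_antisymm (hxm z hzk) (hzm x hx))]
      · right; rw [hF k (le_antisymm (hym z hzk) (hzm y hy))]
    · rintro (rfl | rfl)
      · exact ⟨⟨hxd, by rw [card_insert_of_notMem hxτ, hcard]⟩, subset_insert _ _⟩
      · exact ⟨⟨hyd, by rw [card_insert_of_notMem hyτ, hcard]⟩, subset_insert _ _⟩
  rw [this, card_pair]
  · exact even_two
  · intro h
    have : x ∈ insert y τ := h ▸ mem_insert_self x τ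
    grind

open Classical in
/-- The door of all slack elements except `s i₀` lies in exactly one room: the one obtained by
adding the `F i₀`-largest element that is not slack. -/
theorem card_rooms_start {F : ι → X → ℕ} (hF : ∀ i, Function.Injective (F i))
    {s : ι → X} (hs : Function.Injective s) (hbot : ∀ i x, F i (s i) ≤ F i x)
    (htop : ∀ i j x, j ≠ i → x ∉ Set.range s → F i x < F i (s j))
    {t : X} (hts : t ∉ Set.range s) (i₀ : ι) :
    #{S : Finset X | (Dominant F S ∧ S.card = Fintype.card ι) ∧
      (univ.erase i₀).image s ⊆ S} = 1 := by
  classical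
  have hcard : ((univ.erase i₀).image s).card + 1 = Fintype.card ι := by
    rw [card_image_of_injective _ hs, card_erase_add_one (mem_univ _), card_univ]
  obtain ⟨x, hx, hmax⟩ := (univ.filter fun y => y ∉ Set.range s).exists_max_image
    (F i₀) ⟨t, by simpa using hts⟩
  simp only [mem_filter, mem_univ, true_and] at hx hmax
  have hstrict : ∀ l y, y ∉ Set.range s → F l (s l) < F l y := fun l y hy =>
    lt_of_le_of_ne (hbot l y) fun h => hy ⟨l, hF l h⟩
  have hxτ : x ∉ (univ.erase i₀).image s := by
    intro h
    obtain ⟨l, -, hl⟩ := mem_image.1 h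
    exact hx ⟨l, hl⟩
  rw [card_eq_one]
  refine ⟨insert x ((univ.erase i₀).image s), ?_⟩
  ext S
  simp only [mem_filter, mem_univ, true_and, mem_singleton]
  constructor
  · rintro ⟨⟨hSd, hSc⟩, hτS⟩
    obtain ⟨z, hz, rfl⟩ := Finset.exists_eq_insert_iff.2 ⟨hτS, by rw [hSc, hcard]⟩
    have key : ∀ y, y ∉ Set.range s → F i₀ y ≤ F i₀ z := by
      intro y hy
      obtain ⟨l, hl⟩ := hSd y
      by_cases hl0 : l = i₀
      · subst hl0; exact hl z (mem_insert_self _ _)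
      · have h1 := hl (s l) (mem_insert_of_mem (mem_image_of_mem _ (by simp [hl0])))
        have := hstrict l y hy
        omega
    have hzs : z ∉ Set.range s := by
      rintro ⟨m, rfl⟩
      by_cases hm : m = i₀
      · subst hm
        have := key t hts
        have := hstrict m t hts
        omega
      · exact hz (mem_image_of_mem _ (by simp [hm]))
    rw [hF i₀ (le_antisymm (hmax z hzs) (key x hx))]
  · rintro rfl
    refine ⟨⟨?_, by rw [card_insert_of_notMem hxτ, hcard]⟩, subset_insert _ _⟩
    intro y
    by_cases hy : y ∈ Set.range s
    · obtain ⟨k, rfl⟩ := hy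
      exact ⟨k, fun z _ => hbot k z⟩
    · refine ⟨i₀, fun z hz => ?_⟩
      rcases mem_insert.1 hz with rfl | hz
      · exact hmax y hy
      · obtain ⟨l, hl, rfl⟩ := mem_image.1 hz
        exact (htop i₀ l y (by simpa using hl) hy).le

/-- A room that misses some colour has an even number of doors whose colours are exactly those
different from `i₀`: if there is one, precisely two elements of the room share a colour, and the
doors in question arise by dropping one of them. -/
theorem card_doors_even {c : X → ι} {S : Finset X} (i₀ : ι)
    (hcard : S.card = Fintype.card ι) (hc : ¬ ∀ i, ∃ x ∈ S, c x = i) :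
    Even #{τ : Finset X | (τ.card + 1 = Fintype.card ι ∧ τ.image c = univ.erase i₀) ∧ τ ⊆ S} := by
  classical
  rcases Finset.eq_empty_or_nonempty
    ({τ : Finset X | (τ.card + 1 = Fintype.card ι ∧ τ.image c = univ.erase i₀) ∧ τ ⊆ S} :
      Finset (Finset X)) with h0 | ⟨τ, hτ⟩
  · rw [h0]; simp
  simp only [mem_filter, mem_univ, true_and] at hτ
  obtain ⟨⟨hτc, hτi⟩, hτS⟩ := hτ
  have hinj : ∀ τ' : Finset X, τ'.card + 1 = Fintype.card ι → τ'.image c = univ.erase i₀ →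
      Set.InjOn c τ' := by
    intro τ' h1 h2
    apply card_image_iff.1
    rw [h2, card_erase_of_mem (mem_univ _), card_univ]
    omega
  obtain ⟨x, hx, rfl⟩ := Finset.exists_eq_insert_iff.2 ⟨hτS, by rw [hτc, hcard]⟩
  have hmem : ∀ i, i ≠ i₀ → ∃ y ∈ τ, c y = i := by
    intro i hi
    have : i ∈ τ.image c := by rw [hτi]; simp [hi]
    simpa using this
  have hcx : c x ≠ i₀ := by
    intro h
    apply hc
    intro i
    by_cases hi : i = i₀
    · exact ⟨x, mem_insert_self _ _, by rw [h, hi]⟩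
    · obtain ⟨y, hy, hyi⟩ := hmem i hi
      exact ⟨y, mem_insert_of_mem hy, hyi⟩
  obtain ⟨y, hy, hyx⟩ := hmem _ hcx
  have hxy : x ≠ y := by rintro rfl; exact hx hy
  have : ({τ' : Finset X | (τ'.card + 1 = Fintype.card ι ∧ τ'.image c = univ.erase i₀) ∧
      τ' ⊆ insert x τ} : Finset (Finset X)) = {τ, (insert x τ).erase y} := by
    ext τ'
    simp only [mem_filter, mem_univ, true_and, mem_insert, mem_singleton]
    constructor
    · rintro ⟨⟨h1, h2⟩, h3⟩
      obtain ⟨z, hz, hzS⟩ := Finset.exists_eq_insert_iff.2 ⟨h3, by rw [h1, hcard]⟩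
      have he : τ' = (insert x τ).erase z := by rw [← hzS, erase_insert hz]
      by_cases hzx : z = x
      · left; rw [he, hzx, erase_insert hx]
      by_cases hzy : z = y
      · right; rw [he, hzy]
      exfalso
      refine hxy (hinj τ' h1 h2 ?_ ?_ hyx.symm)
      · rw [he]; simp [Ne.symm hzx]
      · rw [he]; simp [Ne.symm hzy, hy]
    · rintro (rfl | rfl)
      · exact ⟨⟨hτc, hτi⟩, hτS⟩
      · refine ⟨⟨?_, ?_⟩, erase_subset _ _⟩
        · rw [card_erase_add_one (mem_insert_of_mem hy), hcard]
        · rw [← hτi]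
          ext i
          simp only [mem_image, mem_erase, mem_insert]
          constructor
          · rintro ⟨z, ⟨hzy, rfl | hz⟩, rfl⟩
            · exact ⟨y, hy, hyx⟩
            · exact ⟨z, hz, rfl⟩
          · rintro ⟨z, hz, rfl⟩
            by_cases hzy : z = y
            · exact ⟨x, ⟨hxy, Or.inl rfl⟩, by rw [hzy, hyx]⟩
            · exact ⟨z, ⟨hzy, Or.inr hz⟩, rfl⟩
  rw [this, card_pair]
  · exact even_two
  · intro h
    rw [h] at hy
    simp at hy

/-- Scarf's lemma: for every colouring of `X` by the indices in which the slack element `s i` has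
colour `i`, some room carries all colours. -/
theorem exists_colorful [Nonempty ι] {F : ι → X → ℕ} (hF : ∀ i, Function.Injective (F i))
    {s : ι → X} (hs : Function.Injective s) (hbot : ∀ i x, F i (s i) ≤ F i x)
    (htop : ∀ i j x, j ≠ i → x ∉ Set.range s → F i x < F i (s j))
    {t : X} (hts : t ∉ Set.range s) {c : X → ι} (hc : ∀ i, c (s i) = i) :
    ∃ S : Finset X, Dominant F S ∧ S.card = Fintype.card ι ∧ ∀ i, ∃ x ∈ S, c x = i := by
  classical
  by_contra hno
  push Not at hno
  obtain ⟨i₀⟩ := ‹Nonempty ι›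
  let R : Finset (Finset X) := {S | Dominant F S ∧ S.card = Fintype.card ι}
  let E : Finset (Finset X) :=
    {τ | τ.card + 1 = Fintype.card ι ∧ τ.image c = univ.erase i₀}
  have hdc := sum_card_bipartiteAbove_eq_sum_card_bipartiteBelow (s := R) (t := E)
    (fun S τ => τ ⊆ S)
  -- Without a room of all colours the number of incidences is even by `card_doors_even`, but the
  -- single boundary door among those missing only `i₀` makes it odd.
  have hL : Even (∑ S ∈ R, #(E.bipartiteAbove (fun S τ => τ ⊆ S) S)) := by
    refine Finset.even_sum _ fun S hS => ?_
    simp only [R, mem_filter, mem_univ, true_and] at hS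
    have := card_doors_even (c := c) i₀ hS.2 (by push Not; exact hno S hS.1 hS.2)
    simpa only [bipartiteAbove, E, filter_filter] using this
  have hτ₀ : (univ.erase i₀).image s ∈ E := by
    simp only [E, mem_filter, mem_univ, true_and]
    refine ⟨?_, ?_⟩
    · rw [card_image_of_injective _ hs, card_erase_add_one (mem_univ _), card_univ]
    · rw [image_image]
      have : c ∘ s = id := funext hc
      rw [this, image_id]
  rw [hdc, ← add_sum_erase _ _ hτ₀] at hL
  have h1 : #(R.bipartiteBelow (fun S τ => τ ⊆ S) ((univ.erase i₀).image s)) = 1 := by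
    have := card_rooms_start hF hs hbot htop hts i₀
    simpa only [bipartiteBelow, R, filter_filter] using this
  have h2 : Even (∑ τ ∈ E.erase ((univ.erase i₀).image s),
      #(R.bipartiteBelow (fun S τ => τ ⊆ S) τ)) := by
    refine Finset.even_sum _ fun τ hτ => ?_
    obtain ⟨hne, hτ⟩ := mem_erase.1 hτ
    simp only [E, mem_filter, mem_univ, true_and] at hτ
    have : ∃ t ∈ τ, t ∉ Set.range s := by
      by_contra hall
      push Not at hall
      apply hne
      rw [← hτ.2, image_image]
      ext x
      simp only [mem_image, Function.comp]
      constructor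
      · intro hx
        obtain ⟨i, rfl⟩ := hall x hx
        exact ⟨_, hx, by rw [hc]⟩
      · rintro ⟨y, hy, rfl⟩
        obtain ⟨i, rfl⟩ := hall y hy
        rwa [hc]
    obtain ⟨t', ht', hts'⟩ := this
    have := card_rooms_even hF hs hbot htop hτ.1 ht' hts'
    simpa only [bipartiteBelow, R, filter_filter] using this
  rw [h1] at hL
  exact absurd (hL) (by rw [Nat.not_even_iff_odd]; exact odd_one.add_even h2)
end Scarf

/-! ### Brouwer's theorem on the standard simplex -/

section Brouwer
variable {ι : Type*} [Fintype ι]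

/-- The points of mesh `1 / k` of the standard simplex, scaled by `k` to have natural coordinates. -/
abbrev Grid (ι : Type*) [Fintype ι] (k : ℕ) : Type _ :=
  {v : ι → Fin (k + 1) // ∑ i, (v i : ℕ) = k}

/-- The point of the standard simplex represented by a grid point. -/
noncomputable def Grid.point {k : ℕ} (v : Grid ι k) : ι → ℝ := fun i => ((v.1 i : ℕ) : ℝ) / k

theorem Grid.point_mem {k : ℕ} (hk : 0 < k) (v : Grid ι k) : v.point ∈ stdSimplex ℝ ι := by
  refine ⟨fun i => by unfold Grid.point; positivity, ?_⟩
  have hk' : (k : ℝ) ≠ 0 := by positivity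
  have h : ((∑ i, (v.1 i : ℕ) : ℕ) : ℝ) = k := by rw [v.2]
  simp only [Grid.point]
  rw [← Finset.sum_div, div_eq_one_iff_eq hk', ← h]
  push_cast; rfl

variable [DecidableEq ι]

/-- The excess `k - ∑ i, m i` is put on an arbitrary coordinate. -/
theorem Grid.exists_of_sum_le {k : ℕ} [Nonempty ι] (m : ι → ℕ) (hm : ∑ i, m i ≤ k) :
    ∃ v : Grid ι k, ∀ i, m i ≤ v.1 i := by
  obtain ⟨i₀⟩ := ‹Nonempty ι›
  let y : ι → ℕ := fun i => m i + if i = i₀ then k - ∑ i, m i else 0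
  have hy : ∑ i, y i = k := by
    simp only [y, sum_add_distrib, sum_ite_eq', mem_univ, if_true]; omega
  have hyk : ∀ i, y i < k + 1 := fun i =>
    Nat.lt_succ_of_le (hy ▸ single_le_sum (f := y) (fun _ _ => Nat.zero_le _) (mem_univ i))
  exact ⟨⟨fun i => ⟨y i, hyk i⟩, hy⟩, fun i => Nat.le_add_right _ _⟩

/-- The `l`-th linear order on grid points (`inl`) and slack elements (`inr`), as a rank function.
Grid points are ordered by their `l`-th coordinate, ties being broken by a fixed enumeration; the
slack element `l` is below and all other slack elements are above them. -/
noncomputable def gridRank (ι : Type*) [Fintype ι] [DecidableEq ι] (k : ℕ) (l : ι) :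
    Grid ι k ⊕ ι → ℕ :=
  Sum.elim
    (fun v => (v.1 l : ℕ) * Fintype.card (Grid ι k) + Fintype.equivFin (Grid ι k) v + 1)
    (fun j => if j = l then 0 else
      (k + 1) * Fintype.card (Grid ι k) + 1 + Fintype.equivFin ι j)

theorem gridRank_lt_slack {k : ℕ} (l j : ι) (v : Grid ι k) (hj : j ≠ l) :
    gridRank ι k l (.inl v) < gridRank ι k l (.inr j) := by
  simp only [gridRank, Sum.elim_inl, Sum.elim_inr, if_neg hj]
  have h1 := (Fintype.equivFin (Grid ι k) v).2
  have h2 : (v.1 l : ℕ) ≤ k := Nat.lt_succ_iff.1 (v.1 l).2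
  have h3 := Nat.mul_le_mul_right (Fintype.card (Grid ι k)) h2
  rw [Nat.add_mul]
  omega

theorem gridRank_lt {k : ℕ} (l : ι) (v w : Grid ι k) (h : (v.1 l : ℕ) < w.1 l) :
    gridRank ι k l (.inl v) < gridRank ι k l (.inl w) := by
  simp only [gridRank, Sum.elim_inl]
  have h1 := (Fintype.equivFin (Grid ι k) v).2
  have h3 := Nat.mul_le_mul_right (Fintype.card (Grid ι k)) (Nat.succ_le_of_lt h)
  rw [Nat.succ_mul] at h3
  omega

theorem gridRank_injective (k : ℕ) (l : ι) : Function.Injective (gridRank ι k l) := by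
  rintro (v | i) (w | j) h
  · rcases lt_trichotomy (v.1 l : ℕ) (w.1 l) with h' | h' | h'
    · exact absurd h (gridRank_lt l v w h').ne
    · simp only [gridRank, Sum.elim_inl, h'] at h
      have : Fintype.equivFin (Grid ι k) v = Fintype.equivFin (Grid ι k) w := Fin.ext (by omega)
      rw [(Fintype.equivFin (Grid ι k)).injective this]
    · exact absurd h (gridRank_lt l w v h').ne'
  · by_cases hj : j = l
    · simp [gridRank, hj] at h
    · exact absurd h (gridRank_lt_slack l j v hj).ne
  · by_cases hi : i = l
    · simp [gridRank, hi] at h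
    · exact absurd h (gridRank_lt_slack l i w hi).ne'
  · simp only [gridRank, Sum.elim_inr] at h
    by_cases hi : i = l <;> by_cases hj : j = l
    · rw [hi, hj]
    · rw [if_pos hi, if_neg hj] at h; omega
    · rw [if_neg hi, if_pos hj] at h; omega
    · rw [if_neg hi, if_neg hj] at h
      rw [(Fintype.equivFin ι).injective (Fin.ext (by omega) :
        Fintype.equivFin ι i = Fintype.equivFin ι j)]

/-- A point at which `x ≤ h x` holds approximately: for each coordinate it holds, up to an error,
at some nearby point `w`. -/
theorem exists_approx_fixed [Nonempty ι] {h : (ι → ℝ) → ι → ℝ}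
    (hmaps : ∀ x ∈ stdSimplex ℝ ι, h x ∈ stdSimplex ℝ ι) {k : ℕ} (hk : 0 < k) :
    ∃ x ∈ stdSimplex ℝ ι, ∀ l, ∃ w ∈ stdSimplex ℝ ι,
      (∀ i, |w i - x i| ≤ (Fintype.card ι : ℝ) / k) ∧ w l ≤ h w l + (Fintype.card ι : ℝ) / k := by
  classical
  have hcol : ∀ v : Grid ι k, ∃ i, v.point i ≤ h v.point i := by
    intro v
    by_contra hv
    push Not at hv
    have h1 := sum_lt_sum_of_nonempty (s := (univ : Finset ι)) univ_nonempty (fun i _ => hv i)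
    rw [(v.point_mem hk).2, (hmaps _ (v.point_mem hk)).2] at h1
    exact lt_irrefl _ h1
  choose col hcol using hcol
  obtain ⟨t, -⟩ := Grid.exists_of_sum_le (ι := ι) (k := k) (fun _ => 0) (by simp)
  obtain ⟨S, hSd, -, hSc⟩ := exists_colorful (F := gridRank ι k) (gridRank_injective k)
    (s := Sum.inr) Sum.inr_injective (fun i x => by simp [gridRank])
    (fun i j x hj hx => by
      rcases x with v | m
      · exact gridRank_lt_slack i j v hj
      · exact absurd ⟨m, rfl⟩ hx)
    (t := Sum.inl t) (by rintro ⟨i, hi⟩; cases hi) (c := Sum.elim col id) (fun i => rfl)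
  -- If a slack element `l` is in `S`, no grid point is below `S` in the `l`-th order.
  have hdom : ∀ y : Grid ι k, ∃ l, Sum.inr l ∉ S ∧
      ∀ v, Sum.inl v ∈ S → (y.1 l : ℕ) ≤ v.1 l := by
    intro y
    obtain ⟨l, hl⟩ := hSd (.inl y)
    refine ⟨l, fun hlS => ?_, fun v hv => ?_⟩
    · have := hl _ hlS
      simp [gridRank] at this
    · by_contra hlt
      have := gridRank_lt l v y (by omega)
      have := hl _ hv
      omega
  have hreal : ∀ l, Sum.inr l ∉ S → ∃ v, Sum.inl v ∈ S ∧ col v = l := by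
    intro l hl
    obtain ⟨x, hx, hxl⟩ := hSc l
    rcases x with v | m
    · exact ⟨v, hx, hxl⟩
    · have : m = l := hxl
      exact absurd (this ▸ hx) hl
  -- `m l` is the least `l`-th coordinate of a grid point in `S`, or `0` if the slack element `l` is
  -- in `S`. By dominance `m` almost sums to `k`, so that it determines the points of `S` up to `card ι`.
  have hm : ∀ l, ∃ m : ℕ, (∀ v, Sum.inl v ∈ S → m ≤ v.1 l) ∧ (Sum.inr l ∈ S → m = 0) ∧
      (Sum.inr l ∉ S → ∃ v, Sum.inl v ∈ S ∧ (v.1 l : ℕ) = m) := by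
    intro l
    by_cases hl : Sum.inr l ∈ S
    · exact ⟨0, fun _ _ => Nat.zero_le _, fun _ => rfl, fun h => absurd hl h⟩
    · obtain ⟨v₀, hv₀, -⟩ := hreal l hl
      obtain ⟨v, hv, hmin⟩ := (univ.filter fun v : Grid ι k => Sum.inl v ∈ S).exists_min_image
        (fun v => (v.1 l : ℕ)) ⟨v₀, by simpa using hv₀⟩
      simp only [mem_filter, mem_univ, true_and] at hv hmin
      exact ⟨v.1 l, hmin, fun h => absurd h hl, fun _ => ⟨v, hv, rfl⟩⟩
  choose m hmle hm0 hmat using hm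
  have hsum : k < ∑ l, m l + Fintype.card ι := by
    by_contra hle
    obtain ⟨y, hy⟩ := Grid.exists_of_sum_le (k := k) (fun l => m l + 1) (by
      rw [sum_add_distrib]; simp; omega)
    obtain ⟨l, hl, hlv⟩ := hdom y
    obtain ⟨v, hv, hvm⟩ := hmat l hl
    have := hlv v hv
    have := hy l
    omega
  have hclose : ∀ v, Sum.inl v ∈ S → ∀ l, (v.1 l : ℕ) ≤ m l + Fintype.card ι := by
    intro v hv l
    have h1 : ∑ i ∈ univ.erase l, m i ≤ ∑ i ∈ univ.erase l, (v.1 i : ℕ) :=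
      sum_le_sum fun i _ => hmle i v hv
    have h2 := add_sum_erase univ m (mem_univ l)
    have h3 := add_sum_erase univ (fun i => (v.1 i : ℕ)) (mem_univ l)
    have h4 := v.2
    omega
  have hkpos : (0 : ℝ) < k := by exact_mod_cast hk
  obtain ⟨l₀, hl₀, -⟩ := hdom t
  obtain ⟨v₀, hv₀, -⟩ := hreal l₀ hl₀
  refine ⟨v₀.point, v₀.point_mem hk, fun l => ?_⟩
  have habs : ∀ v, Sum.inl v ∈ S → ∀ i,
      |v.point i - v₀.point i| ≤ (Fintype.card ι : ℝ) / k := by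
    intro v hv i
    have h1 : ((v.1 i : ℕ) : ℝ) ≤ (v₀.1 i : ℕ) + Fintype.card ι := by
      have := hclose v hv i
      have := hmle i v₀ hv₀
      exact_mod_cast (by omega : (v.1 i : ℕ) ≤ (v₀.1 i : ℕ) + Fintype.card ι)
    have h2 : ((v₀.1 i : ℕ) : ℝ) ≤ (v.1 i : ℕ) + Fintype.card ι := by
      have := hclose v₀ hv₀ i
      have := hmle i v hv
      exact_mod_cast (by omega : (v₀.1 i : ℕ) ≤ (v.1 i : ℕ) + Fintype.card ι)
    simp only [Grid.point]
    rw [← sub_div, abs_div, abs_of_pos hkpos]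
    gcongr
    rw [abs_le]; constructor <;> linarith
  by_cases hl : Sum.inr l ∈ S
  · refine ⟨v₀.point, v₀.point_mem hk, habs v₀ hv₀, ?_⟩
    have h1 : ((v₀.1 l : ℕ) : ℝ) ≤ Fintype.card ι := by
      have := hclose v₀ hv₀ l
      rw [hm0 l hl] at this
      exact_mod_cast (by omega : (v₀.1 l : ℕ) ≤ Fintype.card ι)
    have h2 := (hmaps _ (v₀.point_mem hk)).1 l
    have h3 : v₀.point l ≤ (Fintype.card ι : ℝ) / k := by
      simp only [Grid.point]; gcongr
    linarith
  · obtain ⟨v, hv, rfl⟩ := hreal l hl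
    refine ⟨v.point, v.point_mem hk, habs v hv, ?_⟩
    have := hcol v
    have : (0 : ℝ) ≤ (Fintype.card ι : ℝ) / k := by positivity
    linarith

theorem brouwer_stdSimplex [Nonempty ι] {h : (ι → ℝ) → ι → ℝ}
    (hcont : ContinuousOn h (stdSimplex ℝ ι))
    (hmaps : ∀ x ∈ stdSimplex ℝ ι, h x ∈ stdSimplex ℝ ι) :
    ∃ x ∈ stdSimplex ℝ ι, h x = x := by
  have hcpt := isCompact_stdSimplex ℝ ι
  have hne : (stdSimplex ℝ ι).Nonempty := by
    obtain ⟨i⟩ := ‹Nonempty ι›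
    exact ⟨_, single_mem_stdSimplex ℝ i⟩
  have happ : ∀ δ > 0, ∃ x ∈ stdSimplex ℝ ι, ∀ l, x l ≤ h x l + δ := by
    intro δ hδ
    have huc := hcpt.uniformContinuousOn_of_continuous hcont
    obtain ⟨η, hη, huc⟩ := Metric.uniformContinuousOn_iff.1 huc (δ / 3) (by positivity)
    obtain ⟨k, hk⟩ := exists_nat_gt ((Fintype.card ι : ℝ) / min η (δ / 3))
    have hmin : 0 < min η (δ / 3) := by positivity
    have hkpos : (0 : ℝ) < k := lt_of_le_of_lt (by positivity) hk
    have hsmall : (Fintype.card ι : ℝ) / k < min η (δ / 3) := by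
      rw [div_lt_iff₀ hmin] at hk
      rw [div_lt_iff₀ hkpos]; linarith
    obtain ⟨x, hx, hxl⟩ := exists_approx_fixed hmaps (k := k) (by exact_mod_cast hkpos)
    refine ⟨x, hx, fun l => ?_⟩
    obtain ⟨w, hw, hwx, hwl⟩ := hxl l
    have hd : dist w x < η := by
      rw [dist_pi_lt_iff hη]
      intro i
      rw [Real.dist_eq]
      exact ((hwx i).trans_lt hsmall).trans_le (min_le_left _ _)
    have h1 := (dist_le_pi_dist (h w) (h x) l).trans_lt (huc w hw x hx hd)
    rw [Real.dist_eq, abs_lt] at h1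
    have h2 := abs_le.1 (hwx l)
    have h3 := hsmall.trans_le (min_le_right _ _)
    linarith [h1.2, h2.1]
  obtain ⟨x, hx, hxmin⟩ := hcpt.exists_isMinOn hne
    (f := fun x => ∑ l, max 0 (x l - h x l)) (by fun_prop)
  have hle : ∑ l, max 0 (x l - h x l) ≤ 0 := by
    refine le_of_forall_pos_le_add fun δ hδ => ?_
    have hN : (0 : ℝ) < Fintype.card ι := by exact_mod_cast Fintype.card_pos
    obtain ⟨y, hy, hyl⟩ := happ (δ / Fintype.card ι) (by positivity)
    refine (hxmin hy).trans ?_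
    have : ∑ l, max 0 (y l - h y l) ≤ ∑ _l : ι, δ / Fintype.card ι :=
      sum_le_sum fun l _ => max_le (by positivity) (by linarith [hyl l])
    rw [sum_const, card_univ, nsmul_eq_mul, mul_div_cancel₀ _ hN.ne'] at this
    linarith
  have hz := (sum_eq_zero_iff_of_nonneg fun l _ => le_max_left 0 (x l - h x l)).1
    (le_antisymm hle (sum_nonneg fun l _ => le_max_left _ _))
  have hxle : ∀ l ∈ univ, x l ≤ h x l := fun l hl => by
    have := le_max_right 0 (x l - h x l)
    rw [hz l hl] at this
    linarith
  have heq := (sum_eq_sum_iff_of_le hxle).1 (by rw [hx.2, (hmaps x hx).2])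
  exact ⟨x, hx, funext fun l => (heq l (mem_univ l)).symm⟩
end Brouwer


/-! ### Expected utility as a function of the agent's own strategy -/

section Nash
variable {n : ℕ}

/-- Expected utility of agent `i` if she plays the pure choice `j` against `x`. -/
noncomputable def choiceUtil (u x : Fin n → Fin n → ℝ) (i j : Fin n) : ℝ :=
  util u (Function.update x i (Pi.single j 1)) i

theorem prob_update (x : Fin n → Fin n → ℝ) (i : Fin n) (y : Fin n → ℝ)
    (s : Fin n → Option (Fin n)) :
    prob (Function.update x i y) s = (s i).elim (1 - ∑ j, y j) y *
      ∏ k ∈ univ.erase i, (s k).elim (1 - ∑ j, x k j) (x k) := by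
  unfold prob
  rw [← mul_prod_erase univ _ (mem_univ i)]
  congr 1
  · simp
  · refine prod_congr rfl fun k hk => ?_
    rw [Function.update_of_ne (ne_of_mem_erase hk)]

theorem util_update (u x : Fin n → Fin n → ℝ) (i : Fin n) {y : Fin n → ℝ}
    (hy : ∑ j, y j = 1) :
    util u (Function.update x i y) i = ∑ j, y j * choiceUtil u x i j := by
  unfold choiceUtil util
  simp_rw [mul_sum]
  rw [sum_comm]
  refine sum_congr rfl fun s _ => ?_
  simp_rw [prob_update]
  have : (s i).elim (1 - ∑ j, y j) y =
      ∑ j, y j * (s i).elim (1 - ∑ k, (Pi.single j 1 : Fin n → ℝ) k) (Pi.single j 1) := by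
    rcases s i with _ | k
    · simp [hy]
    · simp [Pi.single_apply]
  rw [this, sum_mul, sum_mul]
  exact sum_congr rfl fun j _ => by ring

theorem continuous_util (u : Fin n → Fin n → ℝ) (i : Fin n) :
    Continuous fun x => util u x i := by
  unfold util prob
  refine continuous_finsetSum _ fun s _ => Continuous.mul ?_ continuous_const
  refine continuous_finsetProd _ fun k _ => ?_
  rcases s k with _ | j
  · simp only [Option.elim_none]; fun_prop
  · simp only [Option.elim_some]; fun_prop

theorem continuous_choiceUtil (u : Fin n → Fin n → ℝ) (i j : Fin n) :
    Continuous fun x => choiceUtil u x i j :=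
  (continuous_util u i).comp (continuous_id.update i continuous_const)

/-! ### Nash's map and its fixed point -/

/-- Turns a point of the simplex on pairs into a profile without abstention: each row of `n * w` is
divided by its sum if that is at least `1`, and otherwise filled up uniformly to sum `1`. Rows
of `n * w` with sum `1` are left unchanged (`toProfile_of_sum`). -/
noncomputable def toProfile (w : Fin n × Fin n → ℝ) (i j : Fin n) : ℝ :=
  (n * w (i, j) + max 0 (1 - ∑ k, n * w (i, k)) / n) / max 1 (∑ k, n * w (i, k))

theorem toProfile_sum (hn : 0 < n) (w : Fin n × Fin n → ℝ) (i : Fin n) :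
    ∑ j, toProfile w i j = 1 := by
  have hn' : (n : ℝ) ≠ 0 := by positivity
  unfold toProfile
  rw [← sum_div, sum_add_distrib, sum_const, card_univ, Fintype.card_fin, nsmul_eq_mul,
    mul_div_cancel₀ _ hn']
  rcases le_total 1 (∑ k, n * w (i, k)) with h | h
  · rw [max_eq_right h, max_eq_left (by linarith), add_zero, div_self (by linarith)]
  · rw [max_eq_left h, max_eq_right (by linarith)]; ring

theorem toProfile_nonneg {w : Fin n × Fin n → ℝ} (hw : ∀ p, 0 ≤ w p) (i j : Fin n) :
    0 ≤ toProfile w i j := by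
  have := hw (i, j)
  unfold toProfile
  positivity

theorem toProfile_of_sum (w : Fin n × Fin n → ℝ) (i j : Fin n)
    (h : ∑ k, n * w (i, k) = 1) : toProfile w i j = n * w (i, j) := by
  simp [toProfile, h]

theorem continuous_toProfile : Continuous (toProfile (n := n)) := by
  unfold toProfile
  refine continuous_pi fun i => continuous_pi fun j => Continuous.div (by fun_prop) (by fun_prop) ?_
  intro w
  have := le_max_left 1 (∑ k, n * w (i, k))
  linarith

/-- The gain, if positive, of switching from the mixed strategy `z` to the pure choice `j`, where
`p` lists the payoffs of the pure choices. -/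
noncomputable def gain (p z : Fin n → ℝ) (j : Fin n) : ℝ := max 0 (p j - ∑ k, z k * p k)

/-- Nash's map on the mixed strategies of one agent. -/
noncomputable def nashStep (p z : Fin n → ℝ) (j : Fin n) : ℝ :=
  (z j + gain p z j) / (1 + ∑ k, gain p z k)

theorem gain_nonneg (p z : Fin n → ℝ) (j : Fin n) : 0 ≤ gain p z j := le_max_left _ _

theorem one_add_sum_gain_pos (p z : Fin n → ℝ) : 0 < 1 + ∑ k, gain p z k := by
  have : 0 ≤ ∑ k, gain p z k := sum_nonneg fun k _ => gain_nonneg p z k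
  linarith

theorem nashStep_nonneg {p z : Fin n → ℝ} (hz : ∀ j, 0 ≤ z j) (j : Fin n) :
    0 ≤ nashStep p z j :=
  div_nonneg (add_nonneg (hz j) (gain_nonneg p z j)) (one_add_sum_gain_pos p z).le

theorem nashStep_sum {p z : Fin n → ℝ} (hz : ∑ j, z j = 1) : ∑ j, nashStep p z j = 1 := by
  unfold nashStep
  rw [← sum_div, sum_add_distrib, hz, div_self (one_add_sum_gain_pos p z).ne']

/-- At a fixed point of Nash's map no pure choice beats `z`: the gains are proportional to `z`, and
some choice of positive probability does not exceed the average payoff, so all gains vanish. -/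
theorem le_of_nashStep_eq {p z : Fin n → ℝ} (hz : ∀ j, 0 ≤ z j) (hz1 : ∑ j, z j = 1)
    (hfix : ∀ j, nashStep p z j = z j) (j : Fin n) : p j ≤ ∑ k, z k * p k := by
  have hG : ∀ j, gain p z j = z j * ∑ k, gain p z k := by
    intro j
    have := hfix j
    unfold nashStep at this
    rw [div_eq_iff (one_add_sum_gain_pos p z).ne'] at this
    linarith
  have hex : ∃ j, 0 < z j ∧ p j ≤ ∑ k, z k * p k := by
    by_contra hno
    push Not at hno
    have hle : ∀ j, z j * ∑ k, z k * p k ≤ z j * p j := by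
      intro j
      rcases (hz j).eq_or_lt with h | h
      · simp [← h]
      · exact mul_le_mul_of_nonneg_left (hno j h).le h.le
    have hpos : ∃ j, 0 < z j := by
      by_contra h
      push Not at h
      have : ∑ j, z j ≤ 0 := sum_nonpos fun j _ => h j
      linarith
    obtain ⟨j, hj⟩ := hpos
    have := sum_lt_sum (s := univ) (fun j _ => hle j)
      ⟨j, mem_univ j, mul_lt_mul_of_pos_left (hno j hj) hj⟩
    rw [← sum_mul, hz1, one_mul] at this
    exact lt_irrefl _ this
  obtain ⟨j₀, hj₀, hp₀⟩ := hex
  have h0 : gain p z j₀ = 0 := max_eq_left (by linarith)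
  have hS : ∑ k, gain p z k = 0 := by
    have := hG j₀
    rw [h0] at this
    rcases mul_eq_zero.1 this.symm with h | h
    · linarith
    · exact h
  have h1 : gain p z j = 0 := by rw [hG j, hS, mul_zero]
  have h2 : p j - ∑ k, z k * p k ≤ gain p z j := le_max_right _ _
  linarith

/-- The profile in which agent `i` votes with probability `e i` and otherwise plays `z i`. -/
noncomputable def mix (e : Fin n → ℝ) (z : Fin n → Fin n → ℝ) (i j : Fin n) : ℝ :=
  e i * (Pi.single i 1 : Fin n → ℝ) j + (1 - e i) * z i j

/-- An equilibrium of the game in which agent `i` controls only the part `z i` of her strategy. -/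
theorem exists_nash_mix (hn : 0 < n) (u : Fin n → Fin n → ℝ) (e : Fin n → ℝ) :
    ∃ z : Fin n → Fin n → ℝ, (∀ i j, 0 ≤ z i j) ∧ (∀ i, ∑ j, z i j = 1) ∧
      ∀ i j, choiceUtil u (mix e z) i j ≤ ∑ k, z i k * choiceUtil u (mix e z) i k := by
  have : Nonempty (Fin n) := ⟨⟨0, hn⟩⟩
  have hn' : (n : ℝ) ≠ 0 := by positivity
  let step : (Fin n → Fin n → ℝ) → Fin n → Fin n → ℝ :=
    fun z i => nashStep (choiceUtil u (mix e z) i) (z i)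
  let h : (Fin n × Fin n → ℝ) → Fin n × Fin n → ℝ :=
    fun w p => step (toProfile w) p.1 p.2 / n
  have hmix : Continuous (mix e) := by unfold mix; fun_prop
  have hcu : ∀ i j, Continuous fun z => choiceUtil u (mix e z) i j := fun i j =>
    (continuous_choiceUtil u i j).comp hmix
  have hstep : Continuous step := by
    refine continuous_pi fun i => continuous_pi fun j => ?_
    simp only [step, nashStep]
    refine Continuous.div ?_ ?_ fun z => (one_add_sum_gain_pos _ _).ne'
    · unfold gain; fun_prop
    · unfold gain; fun_prop
  have hcont : Continuous h := continuous_pi fun p =>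
    ((continuous_apply p.2).comp ((continuous_apply p.1).comp
      (hstep.comp continuous_toProfile))).div_const _
  have hsum : ∀ w i, ∑ j, step (toProfile w) i j = 1 := fun w i =>
    nashStep_sum (toProfile_sum hn w i)
  have hmaps : ∀ w ∈ stdSimplex ℝ (Fin n × Fin n), h w ∈ stdSimplex ℝ (Fin n × Fin n) := by
    intro w hw
    refine ⟨fun p => div_nonneg (nashStep_nonneg (toProfile_nonneg hw.1 p.1) _) (by positivity), ?_⟩
    simp only [h]
    rw [← sum_div, Fintype.sum_prod_type]
    simp [hsum, hn']
  obtain ⟨w, hw, hfix⟩ := brouwer_stdSimplex hcont.continuousOn hmaps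
  have hnw : ∀ i j, n * w (i, j) = step (toProfile w) i j := by
    intro i j
    conv_lhs => rw [← hfix]
    simp only [h]
    field_simp
  have hprof : ∀ i j, toProfile w i j = step (toProfile w) i j := by
    intro i j
    rw [toProfile_of_sum w i j (by simp_rw [hnw, hsum]), hnw]
  exact ⟨toProfile w, toProfile_nonneg hw.1, toProfile_sum hn w, fun i j =>
    le_of_nashStep_eq (toProfile_nonneg hw.1 i) (toProfile_sum hn w i)
      (fun j => (hprof i j).symm) j⟩

/-- If no pure choice beats `z i` against `mix e z`, then `mix e z i` is a best response among the
strategies with self-vote probability at least `e i`. -/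
theorem best_response_mix (u : Fin n → Fin n → ℝ) {e : Fin n → ℝ}
    {z : Fin n → Fin n → ℝ} (hz1 : ∀ i, ∑ j, z i j = 1)
    (hbr : ∀ i j, choiceUtil u (mix e z) i j ≤ ∑ k, z i k * choiceUtil u (mix e z) i k)
    (i : Fin n) {y : Fin n → ℝ} (hy : ∀ j, 0 ≤ y j) (hy1 : ∑ j, y j = 1) (hyi : e i ≤ y i) :
    util u (Function.update (mix e z) i y) i ≤ util u (mix e z) i := by
  have hx1 : ∑ j, mix e z i j = 1 := by
    simp only [mix, sum_add_distrib, ← mul_sum, hz1]; simp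
  have hself := util_update u (mix e z) i hx1
  rw [Function.update_eq_self] at hself
  rw [hself, util_update u _ i hy1]
  set p := choiceUtil u (mix e z) i with hp
  set A := ∑ k, z i k * p k with hA
  have h1 : ∑ j, mix e z i j * p j = e i * p i + (1 - e i) * A := by
    simp only [mix, add_mul, sum_add_distrib, mul_assoc, ← mul_sum, ← hA]
    simp [Pi.single_apply]
  have h2 : ∑ j, y j * p j =
      e i * p i + ∑ j, (y j - e i * (Pi.single i 1 : Fin n → ℝ) j) * p j := by
    simp only [sub_mul, sum_sub_distrib, mul_assoc, ← mul_sum]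
    simp [Pi.single_apply]
  have h3 : ∑ j, (y j - e i * (Pi.single i 1 : Fin n → ℝ) j) * p j ≤
      ∑ j, (y j - e i * (Pi.single i 1 : Fin n → ℝ) j) * A := by
    refine sum_le_sum fun j _ => mul_le_mul_of_nonneg_left (hbr i j) ?_
    by_cases hj : j = i
    · subst hj; simpa using hyi
    · simpa [hj] using hy j
  have h4 : ∑ j, (y j - e i * (Pi.single i 1 : Fin n → ℝ) j) * A = (1 - e i) * A := by
    rw [← sum_mul, sum_sub_distrib, hy1, ← mul_sum]; simp
  rw [h1, h2]
  linarith
end Nash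

/-- Fixed point existence: for every ε ∈ [0,1] and every subset D* of agents there
is a mixed profile x such that each i ∈ D* plays a best response among the
restricted strategies (unit total probability, self-vote probability at least ε),
and each j ∉ D* plays a best response among all non-abstaining mixed strategies. -/
theorem stmt6 {n : ℕ} (ε : ℝ) (hε : ε ∈ Set.Icc (0:ℝ) 1)
    (u : Fin n → Fin n → ℝ) (hu : ∀ i j, 0 ≤ u i j ∧ u i j ≤ 1)
    (D : Set (Fin n)) :
    ∃ x : Fin n → Fin n → ℝ,
      (∀ i j, 0 ≤ x i j) ∧
      (∀ i ∈ D, (∑ j, x i j) = 1 ∧ ε ≤ x i i ∧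
        ∀ y : Fin n → ℝ, (∀ j, 0 ≤ y j) → (∑ j, y j) = 1 → ε ≤ y i →
          util u x i ≥ util u (Function.update x i y) i) ∧
      (∀ i ∉ D, (∑ j, x i j) = 1 ∧
        ∀ y : Fin n → ℝ, (∀ j, 0 ≤ y j) → (∑ j, y j) = 1 →
          util u x i ≥ util u (Function.update x i y) i) := by
  classical
  rcases Nat.eq_zero_or_pos n with rfl | hn
  · exact ⟨fun i => i.elim0, fun i => i.elim0, fun i => i.elim0, fun i => i.elim0⟩
  let e : Fin n → ℝ := fun i => if i ∈ D then ε else 0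
  have he0 : ∀ i, 0 ≤ e i := fun i => by simp only [e]; split_ifs; exacts [hε.1, le_rfl]
  have he1 : ∀ i, e i ≤ 1 := fun i => by simp only [e]; split_ifs; exacts [hε.2, zero_le_one]
  obtain ⟨z, hz, hz1, hbr⟩ := exists_nash_mix hn u e
  have hx1 : ∀ i, ∑ j, mix e z i j = 1 := fun i => by
    simp only [mix, sum_add_distrib, ← mul_sum, hz1]; simp
  have hz' : ∀ i j, 0 ≤ (1 - e i) * z i j := fun i j =>
    mul_nonneg (by linarith [he1 i]) (hz i j)
  refine ⟨mix e z, fun i j => ?_, fun i hi => ⟨hx1 i, ?_, fun y hy hy1 hyi => ?_⟩,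
    fun i hi => ⟨hx1 i, fun y hy hy1 => ?_⟩⟩
  · refine add_nonneg (mul_nonneg (he0 i) ?_) (hz' i j)
    rw [Pi.single_apply]; split_ifs <;> norm_num
  · have h1 : e i = ε := if_pos hi
    have h2 := hz' i i
    simp only [mix, Pi.single_eq_same, mul_one]
    linarith
  · exact best_response_mix u hz1 hbr i hy hy1 (by rw [show e i = ε from if_pos hi]; exact hyi)
  · exact best_response_mix u hz1 hbr i hy hy1 (by rw [show e i = 0 from if_neg hi]; exact hy i)
end

section
/- Tightness (Theorem 2): for every ε ∈ [0,1] and every γ > 0 there exists a liquid democracy game such that every ε-Nash equilibrium x satisfies SW(x) ≤ ε · OPT + γ. Hence the price of stability for ε-Nash equilibria is exactly ε. -/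
/-!
The witness is a game with three agents, a hub `0`, an authority `1` and a follower `2`. With a
small `δ`, the only nonzero utilities are `u 0 1 = u 1 1 = δ` and `u 2 0 = 1`. Letting the hub vote
and the follower delegate to the hub gives welfare at least `1`. In an `ε`-Nash equilibrium with
`ε < 1`, the authority can secure `δ` by voting, so she votes with positive probability; the hub can
then secure `δ` times that probability by delegating to the authority, whereas she gets at most a
fraction `1 - x 0 0` of it, so she votes with probability `x 0 0 ≤ ε`. The follower earns only when
the hub votes, so the welfare is at most `ε + 2 δ`.

The additive `γ` alone would let a game with negligible welfare satisfy the theorem; the game used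
here has optimum at least `1` for every `γ` (`one_le_of_isGreatest`), so it also shows that the
ratio of equilibrium welfare to the optimum can be brought arbitrarily close to `ε`.
-/

open Finset

/-- The three-agent game: hub `0` and authority `1` value the authority as guru at `δ`, follower `2`
values the hub as guru at `1`, and all other utilities vanish. -/
def starU (δ : ℝ) : Fin 3 → Fin 3 → ℝ := ![![0, δ, 0], ![0, δ, 0], ![1, 0, 0]]

theorem guru_zero : ∀ a b c : Option (Fin 3), guru ![a, b, c] 0 = some 1 ↔
    b = some 1 ∧ (a = some 1 ∨ a = some 2 ∧ c = some 1) := by decide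

theorem guru_one : ∀ a b c : Option (Fin 3), guru ![a, b, c] 1 = some 1 ↔ b = some 1 := by decide

theorem guru_two : ∀ a b c : Option (Fin 3), guru ![a, b, c] 2 = some 0 ↔
    a = some 0 ∧ (c = some 0 ∨ c = some 1 ∧ b = some 0) := by decide

theorem util_eq_sum (u x : Fin 3 → Fin 3 → ℝ) (i : Fin 3) :
    util u x i = ∑ a : Option (Fin 3), ∑ b : Option (Fin 3), ∑ c : Option (Fin 3),
      (a.elim (1 - ∑ j, x 0 j) (x 0) * b.elim (1 - ∑ j, x 1 j) (x 1) *
        c.elim (1 - ∑ j, x 2 j) (x 2)) * pureUtil u ![a, b, c] i := by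
  simp only [← Fintype.sum_prod_type']
  unfold util
  refine Fintype.sum_equiv
    ⟨fun s => (s 0, s 1, s 2), fun p => ![p.1, p.2.1, p.2.2], fun s => ?_, fun p => ?_⟩ _ _ ?_
  · funext k; fin_cases k <;> rfl
  · rfl
  · intro s
    have hs : ![s 0, s 1, s 2] = s := by funext k; fin_cases k <;> rfl
    change _ = _ * pureUtil u ![s 0, s 1, s 2] i
    rw [hs, prob, Fin.prod_univ_three]
    rfl

theorem pureUtil_zero (δ : ℝ) (a b c : Option (Fin 3)) :
    pureUtil (starU δ) ![a, b, c] 0 =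
      if b = some 1 ∧ (a = some 1 ∨ a = some 2 ∧ c = some 1) then δ else 0 := by
  rw [← if_congr (guru_zero a b c) rfl rfl, pureUtil]
  rcases guru ![a, b, c] 0 with _ | k
  · simp
  · fin_cases k <;> simp [starU]

theorem pureUtil_one (δ : ℝ) (a b c : Option (Fin 3)) :
    pureUtil (starU δ) ![a, b, c] 1 = if b = some 1 then δ else 0 := by
  rw [← if_congr (guru_one a b c) rfl rfl, pureUtil]
  rcases guru ![a, b, c] 1 with _ | k
  · simp
  · fin_cases k <;> simp [starU]

theorem pureUtil_two (δ : ℝ) (a b c : Option (Fin 3)) :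
    pureUtil (starU δ) ![a, b, c] 2 =
      if a = some 0 ∧ (c = some 0 ∨ c = some 1 ∧ b = some 0) then 1 else 0 := by
  rw [← if_congr (guru_two a b c) rfl rfl, pureUtil]
  rcases guru ![a, b, c] 2 with _ | k
  · simp
  · fin_cases k <;> simp [starU]

theorem util_zero (δ : ℝ) (x : Fin 3 → Fin 3 → ℝ) :
    util (starU δ) x 0 = δ * x 1 1 * (x 0 1 + x 0 2 * x 2 1) := by
  simp [util_eq_sum, pureUtil_zero, Fintype.sum_option, Fin.sum_univ_three]
  ring

theorem util_one (δ : ℝ) (x : Fin 3 → Fin 3 → ℝ) : util (starU δ) x 1 = δ * x 1 1 := by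
  simp [util_eq_sum, pureUtil_one, Fintype.sum_option, Fin.sum_univ_three]
  ring

theorem util_two (δ : ℝ) (x : Fin 3 → Fin 3 → ℝ) :
    util (starU δ) x 2 = x 0 0 * (x 2 0 + x 2 1 * x 1 0) := by
  simp [util_eq_sum, pureUtil_two, Fintype.sum_option, Fin.sum_univ_three]
  ring

/-- The pure strategy of delegating to agent `1`, who votes if she uses it herself. -/
theorem isStrat_choose_one : IsStrat (![0, 1, 0] : Fin 3 → ℝ) :=
  ⟨fun j => by fin_cases j <;> simp, by simp [Fin.sum_univ_three]⟩

theorem one_le_of_isGreatest {δ OPT : ℝ} (hδ : 0 ≤ δ)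
    (h : IsGreatest (SWvals (starU δ)) OPT) : 1 ≤ OPT := by
  -- The hub and the authority vote, and the follower delegates to the hub.
  let x : Fin 3 → Fin 3 → ℝ := ![![1, 0, 0], ![0, 1, 0], ![1, 0, 0]]
  have hx : IsMixed x := by
    intro i
    refine ⟨fun j => ?_, ?_⟩
    · fin_cases i <;> fin_cases j <;> simp [x]
    · fin_cases i <;> simp [x, Fin.sum_univ_three]
  have hle : SW (starU δ) x ≤ OPT := h.2 ⟨x, hx, rfl⟩
  have hSW : SW (starU δ) x = δ + 1 := by
    simp [SW, Fin.sum_univ_three, util_zero, util_one, util_two, x]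
  linarith

/-- In an `ε`-Nash equilibrium the hub votes with probability at most `ε`. -/
theorem hub_vote_le {ε δ : ℝ} (hε : ε ≤ 1) (hδ : 0 < δ) {x : Fin 3 → Fin 3 → ℝ}
    (hx : IsMixed x) (hN : EpsNash (starU δ) ε x) : x 0 0 ≤ ε := by
  have hs0 := (hx 0).2
  have hs2 := (hx 2).2
  simp only [Fin.sum_univ_three] at hs0 hs2
  have p : ∀ i j, 0 ≤ x i j := fun i => (hx i).1
  rcases hε.eq_or_lt with rfl | hlt
  · linarith [p 0 1, p 0 2]
  have h1 := hN 1 _ isStrat_choose_one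
  have h0 := hN 0 _ isStrat_choose_one
  simp only [util_one, util_zero] at h0 h1
  simp at h0 h1
  have hx11 : 0 < x 1 1 := by
    have : 0 < δ * x 1 1 := lt_of_lt_of_le (mul_pos (by linarith) hδ) h1
    exact pos_of_mul_pos_right this hδ.le
  have hpos : 0 < δ * x 1 1 := mul_pos hδ hx11
  have hfrac : 1 - ε ≤ x 0 1 + x 0 2 * x 2 1 := by
    refine le_of_mul_le_mul_left ?_ hpos
    linarith
  have h21 : x 0 2 * x 2 1 ≤ x 0 2 :=
    mul_le_of_le_one_right (p 0 2) (by linarith [p 2 0, p 2 2])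
  linarith

theorem SW_le_of_epsNash {ε δ : ℝ} (hε : ε ≤ 1) (hδ : 0 < δ) {x : Fin 3 → Fin 3 → ℝ}
    (hx : IsMixed x) (hN : EpsNash (starU δ) ε x) : SW (starU δ) x ≤ ε + 2 * δ := by
  have hhub := hub_vote_le hε hδ hx hN
  have hs0 := (hx 0).2
  have hs1 := (hx 1).2
  have hs2 := (hx 2).2
  simp only [Fin.sum_univ_three] at hs0 hs1 hs2
  have p : ∀ i j, 0 ≤ x i j := fun i => (hx i).1
  have b1 : δ * x 1 1 ≤ δ := mul_le_of_le_one_right hδ.le (by linarith [p 1 0, p 1 2])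
  have h21 : x 0 2 * x 2 1 ≤ x 0 2 :=
    mul_le_of_le_one_right (p 0 2) (by linarith [p 2 0, p 2 2])
  have b0 : δ * x 1 1 * (x 0 1 + x 0 2 * x 2 1) ≤ δ * x 1 1 :=
    mul_le_of_le_one_right (mul_nonneg hδ.le (p 1 1)) (by linarith [p 0 0])
  have h10 : x 2 1 * x 1 0 ≤ x 2 1 :=
    mul_le_of_le_one_right (p 2 1) (by linarith [p 1 1, p 1 2])
  have b2 : x 0 0 * (x 2 0 + x 2 1 * x 1 0) ≤ x 0 0 :=
    mul_le_of_le_one_right (p 0 0) (by linarith [p 2 2])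
  simp only [SW, Fin.sum_univ_three, util_zero, util_one, util_two]
  linarith

/-- Tightness: for every ε ∈ [0,1] and γ > 0 there is a liquid democracy game in
which every ε-Nash equilibrium x satisfies SW(x) ≤ ε · OPT + γ. -/
theorem stmt11 (ε : ℝ) (hε : ε ∈ Set.Icc (0:ℝ) 1) (γ : ℝ) (hγ : 0 < γ) :
    ∃ (n : ℕ) (u : Fin n → Fin n → ℝ),
      (∀ i j, 0 ≤ u i j ∧ u i j ≤ 1) ∧
      ∀ OPT : ℝ, IsGreatest (SWvals u) OPT →
        ∀ x, IsMixed x → EpsNash u ε x → SW u x ≤ ε * OPT + γ := by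
  obtain ⟨hε0, hε1⟩ := hε
  obtain ⟨δ, hδ, hδ1, hδγ⟩ : ∃ δ : ℝ, 0 < δ ∧ δ ≤ 1 ∧ 2 * δ ≤ γ :=
    ⟨min 1 (γ / 2), lt_min one_pos (half_pos hγ), min_le_left _ _,
      by linarith [min_le_right 1 (γ / 2)]⟩
  refine ⟨3, starU δ, fun i j => ?_, fun OPT hOPT x hx hN => ?_⟩
  · fin_cases i <;> fin_cases j <;> simp [starU, hδ.le, hδ1]
  · have hone := one_le_of_isGreatest hδ.le hOPT
    have hSW := SW_le_of_epsNash hε1 hδ hx hN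
    linarith [le_mul_of_one_le_right hε0 hone]
end
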